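/- For every natural number n, M(n) ≥ p_ℙ(n). -/

import Mathlib

/-- The product, with multiplicity, of the factorials of the elements of a multiset. -/
def factorialProd (A : Multiset ℕ) : ℕ := (A.map Nat.factorial).prod

/-- `M n`: the number of distinct multinomial coefficients with upper entry `n`, i.e. the
number of distinct values of `∏_{j ∈ λ} j!` as `λ` ranges over the partitions of `n`. -/
noncomputable def M (n : ℕ) : ℕ :=
  Set.ncard {v : ℕ | ∃ P : Nat.Partition n, factorialProd P.parts = v}

/-- `pP n`: the number of partitions of `n` all of whose parts are prime. -/
noncomputable def pP (n : ℕ) : ℕ :=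
  Set.ncard {P : Nat.Partition n | ∀ j ∈ P.parts, Nat.Prime j}

/-!
The map `A ↦ ∏_{j ∈ A} j!` is injective on multisets of primes. A prime divides this product exactly
when it is at most some element of `A`, so the largest element of a nonempty multiset of primes can
be read off from the product. Two multisets of primes with equal products, stripped of their common
part, still have equal products; were they nonempty, they would share their largest element.
-/

lemma factorialProd_add (A B : Multiset ℕ) :
    factorialProd (A + B) = factorialProd A * factorialProd B := by
  simp [factorialProd]

lemma factorialProd_pos (A : Multiset ℕ) : 0 < factorialProd A := by
  simp [factorialProd, Nat.pos_iff_ne_zero, Nat.factorial_ne_zero]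

lemma prime_dvd_factorialProd_iff {A : Multiset ℕ} {p : ℕ} (hp : p.Prime) :
    p ∣ factorialProd A ↔ ∃ j ∈ A, p ≤ j := by
  constructor
  · intro h
    obtain ⟨j, hj, hdvd⟩ := hp.prime.exists_mem_multiset_map_dvd h
    exact ⟨j, hj, hp.dvd_factorial.mp hdvd⟩
  · rintro ⟨j, hj, hpj⟩
    exact (hp.dvd_factorial.mpr hpj).trans (Multiset.dvd_prod (Multiset.mem_map_of_mem _ hj))

lemma factorialProd_sub_eq_factorialProd_sub {A B : Multiset ℕ}
    (h : factorialProd A = factorialProd B) : factorialProd (A - B) = factorialProd (B - A) := by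
  apply Nat.eq_of_mul_eq_mul_right (factorialProd_pos (A ∩ B))
  calc factorialProd (A - B) * factorialProd (A ∩ B)
      = factorialProd A := by rw [← factorialProd_add, Multiset.sub_add_inter]
    _ = factorialProd B := h
    _ = factorialProd (B - A) * factorialProd (A ∩ B) := by
      rw [← factorialProd_add, Multiset.inter_comm, Multiset.sub_add_inter]

lemma exists_mem_and_mem_of_factorialProd_eq {A B : Multiset ℕ} (hA : ∀ j ∈ A, j.Prime)
    (hB : ∀ j ∈ B, j.Prime) (hA0 : A ≠ 0) (h : factorialProd A = factorialProd B) :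
    ∃ p ∈ A, p ∈ B := by
  obtain ⟨p, hpA, hmax⟩ := Multiset.exists_max_image id hA0
  obtain ⟨q, hqB, hpq⟩ : ∃ q ∈ B, p ≤ q := by
    rw [← prime_dvd_factorialProd_iff (hA p hpA), ← h, prime_dvd_factorialProd_iff (hA p hpA)]
    exact ⟨p, hpA, le_rfl⟩
  obtain ⟨r, hrA, hqr⟩ : ∃ r ∈ A, q ≤ r := by
    rw [← prime_dvd_factorialProd_iff (hB q hqB), h, prime_dvd_factorialProd_iff (hB q hqB)]
    exact ⟨q, hqB, le_rfl⟩
  obtain rfl : p = q := le_antisymm hpq (hqr.trans (hmax r hrA))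
  exact ⟨p, hpA, hqB⟩

lemma le_of_factorialProd_eq {A B : Multiset ℕ} (hA : ∀ j ∈ A, j.Prime)
    (hB : ∀ j ∈ B, j.Prime) (h : factorialProd A = factorialProd B) : A ≤ B := by
  by_contra hAB
  obtain ⟨p, hpA, hpB⟩ := exists_mem_and_mem_of_factorialProd_eq
    (fun j hj => hA j (Multiset.mem_of_le tsub_le_self hj))
    (fun j hj => hB j (Multiset.mem_of_le tsub_le_self hj))
    (mt tsub_eq_zero_iff_le.mp hAB) (factorialProd_sub_eq_factorialProd_sub h)
  exact lt_asymm (Multiset.mem_sub.mp hpA) (Multiset.mem_sub.mp hpB)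

lemma factorialProd_injOn_primes :
    Set.InjOn factorialProd {A : Multiset ℕ | ∀ j ∈ A, j.Prime} := fun _ hA _ hB h =>
  le_antisymm (le_of_factorialProd_eq hA hB h) (le_of_factorialProd_eq hB hA h.symm)

/-- For every natural number `n`, `M(n) ≥ p_ℙ(n)`. -/
theorem M_ge_pP (n : ℕ) : pP n ≤ M n := by
  refine Set.ncard_le_ncard_of_injOn (fun P : Nat.Partition n => factorialProd P.parts)
    (fun P _ => ⟨P, rfl⟩) ?_ (Set.finite_range _)
  exact fun P hP Q hQ h => Nat.Partition.ext (factorialProd_injOn_primes hP hQ h)
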